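/- Let h, d, m, q ∈ ℕ with m ≥ 2 and q < h, and let G := G_{h,d,m}. For a vertex x at level q of the binary tree B(G) that is not the leftmost vertex of its level, let ℓ(x) be the unique leaf of B(G) that is joined by spines to S(Δ(x)) (namely the leaf immediately to the left of the leftmost leaf of B(G) below x), and set S(x) := S(Δ(x)) ∪ {ℓ(x)}. Then for any (not necessarily distinct) vertices x, x' at level q of B(G), neither leftmost of its level, and any distinct vertices u ∈ S(x) and v ∈ S(x'), we have d_G(u,v) ≥ min(d+1, 2(h−q)). -/

import Mathlib

open SimpleGraph

namespace CGT

/-- Distance between two vertex sets, as an extended natural number. -/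
noncomputable def sDist {V : Type*} (G : SimpleGraph V) (U U' : Set V) : ℕ∞ :=
  ⨅ (u : U) (v : U'), G.edist u.1 v.1

/-- The ball of radius `r` around a vertex set `U`. -/
def gBall {V : Type*} (G : SimpleGraph V) (U : Set V) (r : ℕ) : Set V :=
  {v | ∃ u ∈ U, G.edist u v ≤ (r : ℕ∞)}

/-- A set of vertices is connected if the induced subgraph is connected. -/
def SetConn {V : Type*} (G : SimpleGraph V) (U : Set V) : Prop :=
  (G.induce U).Connected

/-- The vertex set of a walk. -/
def walkSupp {V : Type*} {G : SimpleGraph V} {a b : V} (p : G.Walk a b) : Set V :=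
  {v | v ∈ p.support}

/-- `X` separates `Y` and `Z` in `G`: every path with one end in `Y` and one in `Z`
contains a vertex of `X`. -/
def Separates {V : Type*} (G : SimpleGraph V) (X Y Z : Set V) : Prop :=
  ∀ ⦃y z : V⦄, y ∈ Y → z ∈ Z → ∀ p : G.Walk y z, p.IsPath → ∃ x ∈ X, x ∈ p.support

/-- `f` is an `(M,A)`-quasi-isometry from `G` to `H`.  The two-sided distance bound
`M⁻¹ d_G(u,v) - A ≤ d_H(f u, f v) ≤ M d_G(u,v) + A` is stated multiplied out over `ℕ∞`. -/
structure IsQI {V V' : Type*} (M A : ℕ) (G : SimpleGraph V) (H : SimpleGraph V')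
    (f : V → V') : Prop where
  upper : ∀ u v : V, H.edist (f u) (f v) ≤ (M : ℕ∞) * G.edist u v + (A : ℕ∞)
  lower : ∀ u v : V, G.edist u v ≤ (M : ℕ∞) * H.edist (f u) (f v) + (M : ℕ∞) * (A : ℕ∞)
  dense : ∀ w : V', ∃ v : V, H.edist w (f v) ≤ (A : ℕ∞)

/-- `G` is `(M,A)`-quasi-isometric to `H`. -/
def QIsometric {V V' : Type*} (M A : ℕ) (G : SimpleGraph V) (H : SimpleGraph V') : Prop :=
  ∃ f : V → V', IsQI M A G H f

/-- `X` is a minor of `G`. -/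
def HasMinor {V W : Type*} (G : SimpleGraph V) (X : SimpleGraph W) : Prop :=
  ∃ U : W → Set V,
    (∀ x, (U x).Nonempty) ∧ (∀ x, SetConn G (U x)) ∧
    (∀ ⦃x y⦄, x ≠ y → Disjoint (U x) (U y)) ∧
    ∀ ⦃x y⦄, X.Adj x y → ∃ u ∈ U x, ∃ v ∈ U y, G.Adj u v

/-- The `(a × b)`-grid graph. -/
def gridGraph (a b : ℕ) : SimpleGraph (Fin a × Fin b) :=
  SimpleGraph.fromRel (fun u v =>
    (u.1 = v.1 ∧ u.2.1 + 1 = v.2.1) ∨ (u.2 = v.2 ∧ u.1.1 + 1 = v.1.1))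

/-- A `K`-fat model of `X` in `G`: disjoint connected branch sets joined by internally
disjoint branch paths, all pairwise at distance at least `K` except for a branch path and
the branch sets of its endpoints. -/
structure FatModel {V W : Type*} (G : SimpleGraph V) (X : SimpleGraph W) (K : ℕ) where
  branch : W → Set V
  branch_nonempty : ∀ x, (branch x).Nonempty
  branch_connected : ∀ x, SetConn G (branch x)
  branch_disjoint : ∀ ⦃x y⦄, x ≠ y → Disjoint (branch x) (branch y)
  pathEnd : ∀ ⦃x y⦄, X.Adj x y → V
  path : ∀ ⦃x y⦄ (e : X.Adj x y), G.Walk (pathEnd e) (pathEnd e.symm)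
  path_isPath : ∀ ⦃x y⦄ (e : X.Adj x y), (path e).IsPath
  path_symm : ∀ ⦃x y⦄ (e : X.Adj x y), path e.symm = (path e).reverse
  pathEnd_mem : ∀ ⦃x y⦄ (e : X.Adj x y), pathEnd e ∈ branch x
  path_meets : ∀ ⦃x y⦄ (e : X.Adj x y) (z : W) (v : V), v ∈ (path e).support → v ∈ branch z →
    (z = x ∧ v = pathEnd e) ∨ (z = y ∧ v = pathEnd e.symm)
  path_int_disjoint : ∀ ⦃x y x' y'⦄ (e : X.Adj x y) (e' : X.Adj x' y'), s(x, y) ≠ s(x', y') →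
    ∀ v, v ∈ (path e).support → v ∈ (path e').support → v = pathEnd e' ∨ v = pathEnd e'.symm
  fat_branch : ∀ ⦃x y⦄, x ≠ y → (K : ℕ∞) ≤ sDist G (branch x) (branch y)
  fat_path_branch : ∀ ⦃x y⦄ (e : X.Adj x y) (z : W), z ≠ x → z ≠ y →
    (K : ℕ∞) ≤ sDist G (walkSupp (path e)) (branch z)
  fat_paths : ∀ ⦃x y x' y'⦄ (e : X.Adj x y) (e' : X.Adj x' y'), s(x, y) ≠ s(x', y') →
    (K : ℕ∞) ≤ sDist G (walkSupp (path e)) (walkSupp (path e'))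

/-- `X` is a `K`-fat minor of `G`. -/
def IsFatMinor {V W : Type*} (G : SimpleGraph V) (X : SimpleGraph W) (K : ℕ) : Prop :=
  Nonempty (FatModel G X K)

/-- `W` is a `K`-fat `n`-path-connected set in `G`. -/
def FatPathConn {V : Type*} (G : SimpleGraph V) (K n : ℕ) (W : Set V) : Prop :=
  (∃ S : Finset V, ↑S ⊆ W ∧ 2 * n ≤ S.card) ∧
  (∀ ⦃u v : V⦄, u ∈ W → v ∈ W → u ≠ v → (K : ℕ∞) ≤ G.edist u v) ∧
  ∀ l : ℕ, l ≤ n → ∀ A B : Finset V, ↑A ⊆ W → ↑B ⊆ W → A.card = l → B.card = l →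
    ∃ (a b : Fin l → V) (P : ∀ i : Fin l, G.Walk (a i) (b i)),
      (∀ i, (P i).IsPath) ∧ (∀ i, a i ∈ A ∧ b i ∈ B) ∧
      ∀ i j, i ≠ j → (K : ℕ∞) ≤ sDist G (walkSupp (P i)) (walkSupp (P j))

end CGT

namespace Ghdm

/-- Raw vertex codes for the graphs `G_{h,d,m}`:
`path k` is the `k`-th vertex of the base path; `tree j i p` is the vertex at position `p`
of the `i`-th binary tree at level `j` (the root being position `[]`); and
`spine j i k t e s` is the `s`-th internal vertex of the spine from the `k`-th leaf of that
tree to the `e`-th element of the `t`-th local gluing set at level `j-1`. -/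
inductive Raw : Type where
  | path (k : ℕ)
  | tree (j i : ℕ) (p : List Bool)
  | spine (j i k t e s : ℕ)
deriving DecidableEq

/-- `N = 2^{h+1} - 1`, the number of copies of `G_{h,d,m-1}` glued inside `G_{h,d,m}`. -/
def NN (h : ℕ) : ℕ := 2 ^ (h + 1) - 1

/-- Canonical representative of a raw vertex code: all tree roots are identified with the
single root `tree m 1 []`, and the leftmost leaf of tree `i > 1` is identified with the
rightmost leaf of tree `i - 1` (consecutive copies are glued along these leaves). -/
def canon (h m : ℕ) : Raw → Raw
  | .tree j i p =>
    if p = [] then .tree m 1 []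
    else if p = List.replicate h false ∧ 1 < i then .tree j (i - 1) (List.replicate h true)
    else .tree j i p
  | x => x

/-- The `q`-bit binary representation of `i` (most significant bit first);
`false` means "left". -/
def natToBits (q i : ℕ) : List Bool := (List.range q).map fun a => Nat.testBit i (q - 1 - a)

/-- Position of the `k`-th leaf (1-based, from the left) in a binary tree of height `h`. -/
def leafPos (h k : ℕ) : List Bool := natToBits h (k - 1)

/-- The `e`-th element of the `g`-th gluing set `V^{jv}_g` (at level `jv`):
its element `e = 1` is an anchor of the base path, and its element `e ≥ 2` is a shared
extreme leaf of the trees at level `e`. -/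
def VsetElem (h d jv g e : ℕ) : Raw :=
  if e = 1 then .path ((g - 1) * NN h ^ (jv - 1) * (d + 1))
  else if (g - 1) * NN h ^ (jv - e) = 0 then .tree e 1 (List.replicate h false)
  else .tree e ((g - 1) * NN h ^ (jv - e)) (List.replicate h true)

/-- Valid (canonical) vertex codes of `G_{h,d,m}`. -/
def Valid (h d m : ℕ) : Raw → Prop
  | .path k => k ≤ (d + 1) * NN h ^ (m - 1)
  | .tree j i p => 2 ≤ j ∧ j ≤ m ∧ 1 ≤ i ∧ i ≤ NN h ^ (m - j) ∧ p.length ≤ h ∧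
      (p = [] → j = m ∧ i = 1) ∧ (p = List.replicate h false → p ≠ [] → i = 1)
  | .spine j i k t e s => 2 ≤ j ∧ j ≤ m ∧ 1 ≤ i ∧ i ≤ NN h ^ (m - j) ∧
      1 ≤ k ∧ k ≤ 2 ^ h ∧ (t = 2 * k - 2 ∨ t = 2 * k + 1) ∧ 1 ≤ t ∧ t ≤ 2 ^ (h + 1) ∧
      1 ≤ e ∧ e ≤ j - 1 ∧ 1 ≤ s ∧ s ≤ d

/-- Generating adjacencies between raw vertex codes: consecutive base path vertices,
parent/child in the binary trees, consecutive spine vertices, a spine and the leaf it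
starts at, a spine and the gluing-set vertex it ends at (the latter collapsed to a single
edge when `d = 0`). -/
inductive rawAdj (h d : ℕ) : Raw → Raw → Prop
  | base (k : ℕ) : rawAdj h d (.path k) (.path (k + 1))
  | child (j i : ℕ) (p : List Bool) (b : Bool) : p.length < h →
      rawAdj h d (.tree j i p) (.tree j i (p ++ [b]))
  | step (j i k t e s : ℕ) : rawAdj h d (.spine j i k t e s) (.spine j i k t e (s + 1))
  | toLeaf (j i k t e : ℕ) : rawAdj h d (.tree j i (leafPos h k)) (.spine j i k t e 1)
  | toV (j i k t e : ℕ) :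
      rawAdj h d (.spine j i k t e d) (VsetElem h d (j - 1) ((i - 1) * NN h + t) e)
  | short (j i k t e : ℕ) : d = 0 → 1 ≤ k → k ≤ 2 ^ h → (t = 2 * k - 2 ∨ t = 2 * k + 1) →
      1 ≤ t → t ≤ 2 ^ (h + 1) → 1 ≤ e → e ≤ j - 1 →
      rawAdj h d (.tree j i (leafPos h k)) (VsetElem h d (j - 1) ((i - 1) * NN h + t) e)

/-- Adjacency of canonical representatives. -/
def rel (h d m : ℕ) (x y : Raw) : Prop :=
  ∃ a b, rawAdj h d a b ∧ x = canon h m a ∧ y = canon h m b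

/-- The vertex set of `G_{h,d,m}`. -/
def Verts (h d m : ℕ) : Set Raw := {x | Valid h d m x}

/-- The graph `G_{h,d,m}`. -/
def G (h d m : ℕ) : SimpleGraph (Verts h d m) :=
  (SimpleGraph.fromRel (rel h d m)).induce (Verts h d m)

/-- Lift a set of raw codes to a set of vertices of `G_{h,d,m}`. -/
def lift {h d m : ℕ} (S : Set Raw) : Set (Verts h d m) := Subtype.val ⁻¹' S

/-- The root `R(G_{h,d,m})`. -/
def RootR (m : ℕ) : Raw := .tree m 1 []

/-- The gluing set `V^{jv}_g` of `G_{h,d,m}`, as a set of raw codes. -/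
def VsetRaw (h d m jv g : ℕ) : Set Raw :=
  {x | ∃ e, 1 ≤ e ∧ e ≤ jv ∧ x = canon h m (VsetElem h d jv g e)}

/-- The set `S(G_{h,d,m})`. -/
def SsetR (h d m : ℕ) : Set Raw :=
  VsetRaw h d m (m - 1) 1 ∪ {canon h m (.tree m 1 (leafPos h 1))}

/-- The set `T(G_{h,d,m})`. -/
def TsetR (h d m : ℕ) : Set Raw :=
  VsetRaw h d m (m - 1) (2 ^ (h + 1)) ∪ {canon h m (.tree m 1 (leafPos h (2 ^ h)))}

/-- For a vertex of the top binary tree at position `p`, the (1-based) index of the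
leftmost leaf of the top tree below it. -/
def kOf (h : ℕ) (p : List Bool) : ℕ :=
  (p.foldl (fun a b => 2 * a + if b then 1 else 0) 0) * 2 ^ (h - p.length) + 1

/-- `S(Δ(x))` for the vertex `x` of the top binary tree `B(G_{h,d,m})` at position `p`. -/
def SDeltaR (h d m : ℕ) (p : List Bool) : Set Raw :=
  VsetRaw h d m (m - 1) (2 * kOf h p - 1) ∪ {canon h m (.tree m 1 (leafPos h (kOf h p)))}

/-- The leaf of `B(G_{h,d,m})` immediately to the left of the leftmost leaf below the
top-tree vertex at position `p`; it is the unique leaf joined by spines to `S(Δ(x))`. -/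
def leafLeftR (h m : ℕ) (p : List Bool) : Raw :=
  canon h m (.tree m 1 (leafPos h (kOf h p - 1)))

end Ghdm

namespace Ghdm

theorem lip_edist {V : Type*} (G : SimpleGraph V) (f : V → ℕ)
    (hf : ∀ a b, G.Adj a b → f b ≤ f a + 1) (u v : V) (K : ℕ) (h0 : f u = 0) (hv : K ≤ f v) :
    (K : ℕ∞) ≤ G.edist u v := by
  have key : ∀ (a b : V) (w : G.Walk a b), f b ≤ f a + w.length := by
    intro a b w
    induction w with
    | nil => simp
    | cons hadj w ih =>
      have := hf _ _ hadj
      simp only [SimpleGraph.Walk.length_cons]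
      omega
  unfold SimpleGraph.edist
  refine le_iInf fun w => ?_
  have := key u v w
  exact_mod_cast (by omega : K ≤ w.length)

/-- Extension of a potential to the spines. -/
def ext (h d m : ℕ) (ψ : Raw → ℕ) : Raw → ℕ
  | .path k => ψ (.path k)
  | .tree j i p => ψ (.tree j i p)
  | .spine j i k t e s => min (d + 1) (min (ψ (canon h m (.tree j i (leafPos h k))) + s)
      (ψ (canon h m (VsetElem h d (j - 1) ((i - 1) * NN h + t) e)) + (d + 1 - s)))

theorem ext_canon_tree (h d m : ℕ) (ψ : Raw → ℕ) (j i : ℕ) (p : List Bool) :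
    ext h d m ψ (canon h m (.tree j i p)) = ψ (canon h m (.tree j i p)) := by
  unfold canon
  dsimp only
  split_ifs <;> rfl

theorem ext_canon_V (h d m : ℕ) (ψ : Raw → ℕ) (a b c : ℕ) :
    ext h d m ψ (canon h m (VsetElem h d a b c)) = ψ (canon h m (VsetElem h d a b c)) := by
  unfold VsetElem
  split_ifs
  · rfl
  · apply ext_canon_tree
  · apply ext_canon_tree

theorem main_lip (h d m : ℕ) (hd : 1 ≤ d) (ψ : Raw → ℕ) (hψ : ∀ x, ψ x ≤ d + 1)
    (hbase : ∀ k, ψ (.path k) ≤ ψ (.path (k + 1)) + 1 ∧ ψ (.path (k + 1)) ≤ ψ (.path k) + 1)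
    (hchild : ∀ j i p b, p.length < h → Valid h d m (canon h m (.tree j i p)) →
      Valid h d m (canon h m (.tree j i (p ++ [b]))) →
      ψ (canon h m (.tree j i p)) ≤ ψ (canon h m (.tree j i (p ++ [b]))) + 1 ∧
      ψ (canon h m (.tree j i (p ++ [b]))) ≤ ψ (canon h m (.tree j i p)) + 1)
    (u v : Verts h d m) (K : ℕ) (h0 : ext h d m ψ u.1 = 0) (hv : K ≤ ext h d m ψ v.1) :
    (K : ℕ∞) ≤ (G h d m).edist u v := by
  have key : ∀ x y, Valid h d m x → Valid h d m y → rel h d m x y →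
      ext h d m ψ x ≤ ext h d m ψ y + 1 ∧ ext h d m ψ y ≤ ext h d m ψ x + 1 := by
    rintro x y hx hy ⟨a, b, hab, rfl, rfl⟩
    cases hab with
    | base k => exact hbase k
    | child j i p b hp =>
      rw [ext_canon_tree, ext_canon_tree]
      exact hchild j i p b hp hx hy
    | step j i k t e s =>
      simp only [canon, Valid] at hx hy
      simp only [canon, ext]
      omega
    | toLeaf j i k t e =>
      rw [ext_canon_tree]
      have := hψ (canon h m (.tree j i (leafPos h k)))
      generalize hA : canon h m (.tree j i (leafPos h k)) = A at *
      have hc : canon h m (.spine j i k t e 1) = .spine j i k t e 1 := rfl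
      rw [hc]
      simp only [ext, hA]
      omega
    | toV j i k t e =>
      rw [ext_canon_V]
      have := hψ (canon h m (VsetElem h d (j - 1) ((i - 1) * NN h + t) e))
      generalize hA : canon h m (VsetElem h d (j - 1) ((i - 1) * NN h + t) e) = A at *
      have hc : canon h m (.spine j i k t e d) = .spine j i k t e d := rfl
      rw [hc]
      simp only [ext, hA]
      omega
    | short j i k t e hd0 => omega
  refine lip_edist (G h d m) (fun x => ext h d m ψ x.1) ?_ u v K h0 hv
  intro a b hab
  have hab' : a.1 ≠ b.1 ∧ (rel h d m a.1 b.1 ∨ rel h d m b.1 a.1) := by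
    simpa [G] using hab
  rcases hab'.2 with hr | hr
  · exact (key _ _ a.2 b.2 hr).2
  · exact (key _ _ b.2 a.2 hr).1

/-- Length of the longest common prefix. -/
def lcp : List Bool → List Bool → ℕ
  | a :: l, b :: l' => if a = b then lcp l l' + 1 else 0
  | _, _ => 0

theorem lcp_nil (l : List Bool) : lcp l [] = 0 := by cases l <;> rfl

theorem lcp_le (l l' : List Bool) : lcp l l' ≤ l.length ∧ lcp l l' ≤ l'.length := by
  induction l generalizing l' with
  | nil => simp [lcp]
  | cons a l ih =>
    cases l' with
    | nil => simp [lcp]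
    | cons b l' =>
      have := ih l'
      simp only [lcp, List.length_cons]
      split_ifs <;> omega

theorem lcp_self (l : List Bool) : lcp l l = l.length := by
  induction l with
  | nil => rfl
  | cons a l ih => simp [lcp, ih]

theorem lcp_append (l p : List Bool) (b : Bool) : lcp l (p ++ [b]) = lcp l p ∨
    (lcp l (p ++ [b]) = lcp l p + 1 ∧ lcp l p = p.length) := by
  induction l generalizing p with
  | nil => simp [lcp]
  | cons a l ih =>
    cases p with
    | nil =>
      simp only [List.nil_append, lcp, lcp_nil, List.length_nil]
      split_ifs <;> simp
    | cons c p =>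
      have := ih p
      simp only [List.cons_append, lcp, List.length_cons]
      split_ifs <;> omega

theorem lcp_special (r : ℕ) (hr : 1 ≤ r) (b b' : Bool) (s s' : List Bool)
    (hs : s.length = s'.length)
    (hne : s ++ List.replicate r b ≠ s' ++ List.replicate r b') :
    lcp (s ++ List.replicate r b) (s' ++ List.replicate r b') ≤ s.length := by
  induction s generalizing s' with
  | nil =>
    have : s' = [] := by
      cases s' with
      | nil => rfl
      | cons a l => simp at hs
    subst this
    obtain ⟨n, rfl⟩ : ∃ n, r = n + 1 := ⟨r - 1, by omega⟩
    simp only [List.nil_append, List.replicate_succ, lcp] at *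
    split_ifs with hb
    · subst hb; exact absurd rfl hne
    · simp
  | cons a s ih =>
    cases s' with
    | nil => simp at hs
    | cons a' s' =>
      simp only [List.cons_append, lcp, List.length_cons] at *
      split_ifs with hb
      · subst hb
        have := ih s' (by omega) (fun hh => hne (by rw [hh]))
        omega
      · omega

theorem lcp_tf (h n : ℕ) (b : Bool) : lcp (List.replicate h b) (List.replicate n (!b)) = 0 := by
  cases h <;> cases n <;> simp [lcp, List.replicate_succ]

/-- Tree distance in terms of the common prefix. -/
theorem tdist_step (h : ℕ) (P p : List Bool) (b : Bool) (hP : P.length = h) (d : ℕ) :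
    min (d + 1) (h + p.length - 2 * lcp P p) ≤
      min (d + 1) (h + (p ++ [b]).length - 2 * lcp P (p ++ [b])) + 1 ∧
    min (d + 1) (h + (p ++ [b]).length - 2 * lcp P (p ++ [b])) ≤
      min (d + 1) (h + p.length - 2 * lcp P p) + 1 := by
  have h1 := lcp_append P p b
  have h2 := lcp_le P p
  have h3 := lcp_le P (p ++ [b])
  simp only [List.length_append, List.length_singleton] at *
  omega

/-- Potential for a base path anchor. -/
def psiP (d c : ℕ) : Raw → ℕ
  | .path k => min (d + 1) ((k - c) + (c - k))
  | _ => d + 1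

/-- Potential for a leaf of the top tree. -/
def psiT (h d m : ℕ) (P : List Bool) : Raw → ℕ
  | .tree j _ p => min (d + 1) (h + p.length - 2 * (if j = m then lcp P p else 0))
  | _ => d + 1

/-- Prefix weight for a shared leaf of lower trees. -/
def wgt (h e I j i : ℕ) (p : List Bool) : ℕ :=
  if j = e then (if i = I then lcp (List.replicate h true) p
    else if i = I + 1 then lcp (List.replicate h false) p else 0) else 0

/-- Potential for a shared leaf of lower trees. -/
def psiB (h d e I : ℕ) : Raw → ℕ
  | .tree j i p => min (d + 1) (h + p.length - 2 * wgt h e I j i p)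
  | _ => d + 1

/-- The possible shapes of vertices in `S(x)`. -/
def Target (h d m q : ℕ) (x : Raw) : Prop :=
  (∃ c, x = .path (c * (d + 1))) ∨
  (∃ s b, s.length = q ∧ x = .tree m 1 (s ++ List.replicate (h - q) b)) ∨
  (∃ e I, e < m ∧ 1 ≤ I ∧ x = .tree e I (List.replicate h true))

theorem natToBits_split (q r n : ℕ) :
    natToBits (q + r) n = natToBits q (n / 2 ^ r) ++ natToBits r n := by
  unfold natToBits
  rw [List.range_add, List.map_append, List.map_map]
  congr 1
  · apply List.map_congr_left
    intro a ha
    rw [List.mem_range] at ha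
    rw [Nat.testBit_div_two_pow]
    congr 1
    omega
  · apply List.map_congr_left
    intro a ha
    simp only [Function.comp]
    congr 1
    omega

theorem natToBits_const (r n : ℕ) (b : Bool) (hb : ∀ j < r, n.testBit j = b) :
    natToBits r n = List.replicate r b := by
  unfold natToBits
  rw [List.eq_replicate_iff]
  refine ⟨by simp, ?_⟩
  intro x hx
  simp only [List.mem_map, List.mem_range] at hx
  obtain ⟨a, ha, rfl⟩ := hx
  exact hb _ (by omega)

theorem natToBits_len (r n : ℕ) : (natToBits r n).length = r := by simp [natToBits]

theorem leaf_special (h q n : ℕ) (b : Bool) (hq : q < h) (hb : ∀ j < h - q, n.testBit j = b) :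
    ∃ s, s.length = q ∧ natToBits h n = s ++ List.replicate (h - q) b := by
  refine ⟨natToBits q (n / 2 ^ (h - q)), natToBits_len _ _, ?_⟩
  rw [← natToBits_const _ _ _ hb, ← natToBits_split]
  congr 1
  omega

theorem canon_top (h m : ℕ) (p : List Bool) (hp : p ≠ []) :
    canon h m (.tree m 1 p) = .tree m 1 p := by
  simp [canon, hp]

theorem foldl_pos (p : List Bool) (a : ℕ)
    (hp : 0 < a ∨ p ≠ List.replicate p.length false) :
    0 < p.foldl (fun a b => 2 * a + if b then 1 else 0) a := by
  induction p generalizing a with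
  | nil => simpa using hp
  | cons b p ih =>
    simp only [List.foldl_cons]
    apply ih
    rcases hp with hp | hp
    · left; omega
    · cases b with
      | true => left; simp
      | false =>
        right
        intro hh
        apply hp
        simp only [List.length_cons, List.replicate_succ]
        rw [← hh]

theorem target_of (h d m q : ℕ) (hq : q < h) (p : List Bool) (hp : p.length = q)
    (hpl : p ≠ List.replicate q false) (x : Raw)
    (hx : x ∈ SDeltaR h d m p ∪ {leafLeftR h m p}) : Target h d m q x := by
  have hh : h ≠ 0 := by omega
  have hne : ∀ n, natToBits h n ≠ [] := by
    intro n hn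
    have := natToBits_len h n
    rw [hn] at this
    simp at this
    omega
  have hc : 0 < p.foldl (fun a b => 2 * a + if b then 1 else 0) 0 :=
    foldl_pos p 0 (Or.inr (by rw [hp]; exact hpl))
  have hk : kOf h p = (p.foldl (fun a b => 2 * a + if b then 1 else 0) 0) * 2 ^ (h - q) + 1 := by
    rw [kOf, hp]
  generalize p.foldl (fun a b => 2 * a + if b then 1 else 0) 0 = c at hc hk
  have hpw : 0 < 2 ^ (h - q) := by positivity
  have hmul : 0 < c * 2 ^ (h - q) := by positivity
  rcases hx with (⟨e, he1, he2, rfl⟩ | hx) | hx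
  · unfold VsetElem
    by_cases h1 : e = 1
    · left
      rw [if_pos h1]
      exact ⟨_, rfl⟩
    · rw [if_neg h1]
      have hN : 0 < NN h := by
        have : 2 ^ 1 ≤ 2 ^ (h + 1) := Nat.pow_le_pow_right (by norm_num) (by omega)
        unfold NN; omega
      have hI : 0 < (2 * kOf h p - 1 - 1) * NN h ^ (m - 1 - e) := by
        apply Nat.mul_pos
        · omega
        · positivity
      rw [if_neg (by omega)]
      right; right
      refine ⟨e, _, by omega, hI, ?_⟩
      obtain ⟨n, rfl⟩ : ∃ n, h = n + 1 := ⟨h - 1, by omega⟩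
      simp [canon, List.replicate_succ]
  · right; left
    obtain ⟨s, hs, hs'⟩ := leaf_special h q (c * 2 ^ (h - q)) false hq (by
      intro j hj
      rw [Nat.testBit_mul_two_pow]
      simp; omega)
    refine ⟨s, false, hs, ?_⟩
    rw [Set.mem_singleton_iff] at hx
    rw [hx, leafPos, hk, canon_top _ _ _ (hne _), Nat.add_sub_cancel, hs']
  · right; left
    obtain ⟨s, hs, hs'⟩ := leaf_special h q (c * 2 ^ (h - q) - 1) true hq (by
      intro j hj
      obtain ⟨c', rfl⟩ : ∃ c', c = c' + 1 := ⟨c - 1, by omega⟩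
      have e1 : (c' + 1) * 2 ^ (h - q) - 1 = 2 ^ (h - q) * c' + (2 ^ (h - q) - 1) := by
        have : (c' + 1) * 2 ^ (h - q) = 2 ^ (h - q) * c' + 2 ^ (h - q) := by ring
        omega
      rw [e1, Nat.testBit_two_pow_mul_add _ (by omega), if_pos hj, Nat.testBit_two_pow_sub_one]
      simpa using hj)
    refine ⟨s, true, hs, ?_⟩
    rw [Set.mem_singleton_iff] at hx
    rw [hx, leafLeftR, leafPos, hk, canon_top _ _ _ (hne _), Nat.add_sub_cancel, hs']

theorem ext_path (h d m q : ℕ) (hd : 1 ≤ d) (u v : Verts h d m) (c : ℕ)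
    (hu : u.1 = .path (c * (d + 1))) (hv : Target h d m q v.1) (huv : u.1 ≠ v.1) :
    ((d + 1 : ℕ) : ℕ∞) ≤ (G h d m).edist u v := by
  apply main_lip h d m hd (psiP d (c * (d + 1)))
  · intro x
    cases x <;> simp [psiP]
  · intro k
    simp only [psiP]
    omega
  · intro j i p b _ _ _
    have : ∀ j i p, psiP d (c * (d + 1)) (canon h m (.tree j i p)) = d + 1 := by
      intro j i p
      unfold canon
      dsimp only
      split_ifs <;> rfl
    rw [this, this]
    omega
  · rw [hu]
    simp [ext, psiP]
  · rcases hv with ⟨c', hv⟩ | ⟨s, b, _, hv⟩ | ⟨e, I, _, _, hv⟩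
    · rw [hv]
      simp only [ext, psiP]
      have hcc : c ≠ c' := by
        rintro rfl
        exact huv (hu.trans hv.symm)
      refine le_min le_rfl ?_
      rcases Nat.lt_or_gt_of_ne hcc with hlt | hlt
      · have : (c + 1) * (d + 1) ≤ c' * (d + 1) := Nat.mul_le_mul_right _ hlt
        rw [Nat.succ_mul] at this
        omega
      · have : (c' + 1) * (d + 1) ≤ c * (d + 1) := Nat.mul_le_mul_right _ hlt
        rw [Nat.succ_mul] at this
        omega
    · rw [hv]; simp [ext, psiP]
    · rw [hv]; simp [ext, psiP]

theorem ext_low (h d m q : ℕ) (hh : 2 ≤ h) (hd : 1 ≤ d) (u v : Verts h d m) (e I : ℕ)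
    (he : e < m) (hI : 1 ≤ I)
    (hu : u.1 = .tree e I (List.replicate h true)) (hv : Target h d m q v.1)
    (hq : q < h) (huv : u.1 ≠ v.1) :
    ((min (d + 1) (2 * (h - q)) : ℕ) : ℕ∞) ≤ (G h d m).edist u v := by
  apply main_lip h d m hd (psiB h d e I)
  · intro x
    cases x <;> simp [psiB]
  · intro k
    simp only [psiB]
    omega
  · intro j i p b hp hx hy
    have hcan : ∀ j i p, psiB h d e I (canon h m (.tree j i p)) = psiB h d e I (.tree j i p) := by
      intro j i p
      by_cases hpn : p = []
      · subst hpn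
        simp [canon, psiB, wgt, lcp_nil]
      · by_cases hs : p = List.replicate h false ∧ 1 < i
        · obtain ⟨rfl, hi⟩ := hs
          have e1 : lcp (List.replicate h true) (List.replicate h false) = 0 := lcp_tf h h true
          have e2 : lcp (List.replicate h false) (List.replicate h true) = 0 := lcp_tf h h false
          simp only [canon, if_neg hpn, if_pos hi, psiB, wgt, true_and, lcp_self, e1, e2,
            List.length_replicate]
          congr 3
          split_ifs <;> omega
        · simp only [canon, if_neg hpn, if_neg hs]
    rw [hcan, hcan]
    have t1 := tdist_step h (List.replicate h true) p b (by simp) d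
    have t2 := tdist_step h (List.replicate h false) p b (by simp) d
    simp only [psiB, wgt]
    split_ifs
    · exact t1
    · exact t2
    all_goals (simp only [List.length_append, List.length_singleton]; omega)
  · rw [hu]
    simp only [ext, psiB, wgt, if_true, lcp_self, List.length_replicate]
    omega
  · rcases hv with ⟨c', hv⟩ | ⟨s, b, hs, hv⟩ | ⟨e', I', _, _, hv⟩
    · rw [hv]; simp [ext, psiB]
    · rw [hv]
      simp only [ext, psiB, wgt, if_neg (by omega : ¬ m = e), List.length_append,
        List.length_replicate]
      omega
    · rw [hv]
      have e2 : lcp (List.replicate h false) (List.replicate h true) = 0 := lcp_tf h h false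
      simp only [ext, psiB, wgt, e2, List.length_replicate]
      have : ¬ (e' = e ∧ I' = I) := by
        rintro ⟨rfl, rfl⟩
        exact huv (hu.trans hv.symm)
      split_ifs <;> first | omega | (exfalso; tauto)

theorem ext_top (h d m q : ℕ) (hh : 2 ≤ h) (hd : 1 ≤ d) (u v : Verts h d m)
    (s : List Bool) (b : Bool) (hs : s.length = q)
    (hu : u.1 = .tree m 1 (s ++ List.replicate (h - q) b)) (hv : Target h d m q v.1)
    (hq : q < h) (huv : u.1 ≠ v.1) :
    ((min (d + 1) (2 * (h - q)) : ℕ) : ℕ∞) ≤ (G h d m).edist u v := by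
  have hP : (s ++ List.replicate (h - q) b).length = h := by simp; omega
  apply main_lip h d m hd (psiT h d m (s ++ List.replicate (h - q) b))
  · intro x
    cases x <;> simp [psiT]
  · intro k
    simp only [psiT]
    omega
  · intro j i p b' hp hx hy
    have t1 := tdist_step h (s ++ List.replicate (h - q) b) p b' hP d
    have hcan : ∀ q', (j = m → q' = [] ∨ ¬ (q' = List.replicate h false ∧ 1 < i)) →
        psiT h d m (s ++ List.replicate (h - q) b) (canon h m (.tree j i q')) =
        psiT h d m (s ++ List.replicate (h - q) b) (.tree j i q') := by
      intro q' hq'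
      by_cases hpn : q' = []
      · subst hpn
        simp [canon, psiT, lcp_nil]
      · by_cases hss : q' = List.replicate h false ∧ 1 < i
        · have hjm : j ≠ m := fun hj => (hq' hj).elim hpn (fun h' => h' hss)
          simp only [canon, if_neg hpn, if_pos hss, psiT, if_neg hjm, List.length_replicate]
          rw [hss.1, List.length_replicate]
        · simp only [canon, if_neg hpn, if_neg hss]
    have c1 : ¬ (p = List.replicate h false ∧ 1 < i) := by
      rintro ⟨rfl, _⟩
      simp at hp
    rw [hcan p (fun _ => Or.inr c1), hcan (p ++ [b'])]
    · simp only [psiT]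
      split_ifs
      · exact t1
      · simp only [List.length_append, List.length_singleton]; omega
    · rintro rfl
      right
      rintro ⟨h1, h2⟩
      have hlen := congrArg List.length h1
      simp only [List.length_append, List.length_singleton, List.length_replicate] at hlen
      have hpn : p ≠ [] := by
        rintro rfl
        simp at hlen
        omega
      simp only [canon, if_neg hpn, if_neg c1, Valid, Nat.sub_self, pow_zero] at hx
      omega
  · rw [hu]
    simp only [ext, psiT, if_true, lcp_self, hP]
    omega
  · rcases hv with ⟨c', hv⟩ | ⟨s', b', hs', hv⟩ | ⟨e', I', he', _, hv⟩
    · rw [hv]; simp [ext, psiT]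
    · rw [hv]
      have hne : s ++ List.replicate (h - q) b ≠ s' ++ List.replicate (h - q) b' := by
        intro hh'
        exact huv (by rw [hu, hv, hh'])
      have := lcp_special (h - q) (by omega) b b' s s' (by omega) hne
      have hP' : (s' ++ List.replicate (h - q) b').length = h := by simp; omega
      simp only [ext, psiT, if_true, hP']
      omega
    · rw [hv]
      simp only [ext, psiT, if_neg (by omega : ¬ e' = m), List.length_replicate]
      omega

end Ghdm

/-- for vertices `x, x'` (at positions `p, p'`) at level `q < h` of
`B(G_{h,d,m})`, neither leftmost at its level, any two distinct vertices
`u ∈ S(x) = S(Δ(x)) ∪ {ℓ(x)}` and `v ∈ S(x')` satisfy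
`d_G(u,v) ≥ min(d+1, 2(h-q))`. -/
theorem statement13 (h d m q : ℕ) (hm : 2 ≤ m) (hq : q < h)
    (p p' : List Bool) (hp : p.length = q) (hp' : p'.length = q)
    (hpl : p ≠ List.replicate q false) (hpl' : p' ≠ List.replicate q false)
    (u v : Ghdm.Verts h d m)
    (hu : u.1 ∈ Ghdm.SDeltaR h d m p ∪ {Ghdm.leafLeftR h m p})
    (hv : v.1 ∈ Ghdm.SDeltaR h d m p' ∪ {Ghdm.leafLeftR h m p'})
    (huv : u ≠ v) :
    ((min (d + 1) (2 * (h - q)) : ℕ) : ℕ∞) ≤ (Ghdm.G h d m).edist u v := by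
  have huv' : u.1 ≠ v.1 := fun hh => huv (Subtype.ext hh)
  have tu := Ghdm.target_of h d m q hq p hp hpl u.1 hu
  have tv := Ghdm.target_of h d m q hq p' hp' hpl' v.1 hv
  rcases Nat.eq_zero_or_pos d with hd | hd
  · have h1 : (1 : ℕ∞) ≤ (Ghdm.G h d m).edist u v := by
      rw [Order.one_le_iff_ne_zero]
      simpa using huv
    refine le_trans ?_ h1
    have : min (d + 1) (2 * (h - q)) ≤ 1 := by omega
    exact_mod_cast this
  have hh : 2 ≤ h := by
    have : q ≠ 0 := by
      rintro rfl
      apply hpl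
      simpa using hp
    omega
  have hle : ((min (d + 1) (2 * (h - q)) : ℕ) : ℕ∞) ≤ ((d + 1 : ℕ) : ℕ∞) := by
    exact_mod_cast min_le_left _ _
  rcases tu with ⟨c, hc⟩ | ⟨s, b, hs, hc⟩ | ⟨e, I, he, hI, hc⟩
  · exact hle.trans (Ghdm.ext_path h d m q hd u v c hc tv huv')
  · exact Ghdm.ext_top h d m q hh hd u v s b hs hc tv hq huv'
  · exact Ghdm.ext_low h d m q hh hd u v e I he hI hc tv hq huv'
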